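/- Continuum terminated fixed point. Let ω be a regular averaging kernel and let (hf, hg) ∈ 𝒳² be such that hg is continuous at 0 and Φ(hf, hg; ·, ·) is uniquely minimized over [0,1]² at (1,1) (hence A(hf, hg) < 0). Then there exist (0,1)-interpolating F, G ∈ Ψ forming a fixed point of the one-sided termination of the continuum spatially coupled recursion: F(x) = 0 for x < 0, F(x) = hf((G ⊗ ω)(x)) for x > 0, and G(x) = hg((F ⊗ ω)(x)) for all x ∈ ℝ. -/

import Mathlib

open MeasureTheory Filter Set

noncomputable section

/-- Convolution `(f ⊗ ω)(x) = ∫ y, f y · ω (x − y)`. -/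
def conv (f ω : ℝ → ℝ) (x : ℝ) : ℝ := ∫ y : ℝ, f y * ω (x - y)

/-- `ω` is an averaging kernel: even, nonnegative, of bounded variation, integrating to 1. -/
def IsAveragingKernel (ω : ℝ → ℝ) : Prop :=
  (∀ x, ω (-x) = ω x) ∧ (∀ x, 0 ≤ ω x) ∧ BoundedVariationOn ω Set.univ ∧
    MeasureTheory.Integrable ω ∧ (∫ x : ℝ, ω x) = 1

/-- The essential supremum `‖ω‖∞` of a kernel, as a real number. -/
def kerSup (ω : ℝ → ℝ) : ℝ := (eLpNorm ω ⊤ MeasureTheory.volume).toReal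

/-- `ω` is regular: for some `W ∈ (0,∞]`, it vanishes outside `[−W, W]` and is
positive on `(−W, W)` (the case `W = ∞` being that `ω` is everywhere positive). -/
def IsRegularKernel (ω : ℝ → ℝ) : Prop :=
  (∀ x, 0 < ω x) ∨
    ∃ W : ℝ, 0 < W ∧ (∀ x, W < |x| → ω x = 0) ∧ (∀ x, |x| < W → 0 < ω x)

/-- Membership in `𝒳`: nondecreasing self-maps of `[0,1]`. -/
def MemX (h : ℝ → ℝ) : Prop :=
  MonotoneOn h (Icc 0 1) ∧ MapsTo h (Icc 0 1) (Icc 0 1)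

/-- Left limit `h(u−)` of `h ∈ 𝒳` at `u ∈ [0,1]`, with the convention `h(0−) = 0`. -/
def lm (h : ℝ → ℝ) (u : ℝ) : ℝ := if u ≤ 0 then 0 else sSup (h '' Ico 0 u)

/-- Right limit `h(u+)` of `h ∈ 𝒳` at `u ∈ [0,1]`, with the convention `h(1+) = 1`. -/
def rm (h : ℝ → ℝ) (u : ℝ) : ℝ := if 1 ≤ u then 1 else sInf (h '' Ioc u 1)

/-- A canonical generalized inverse of `h ∈ 𝒳` (any valid inverse has the same integrals,
so the potential below is unambiguous). -/
def Xinv (h : ℝ → ℝ) (v : ℝ) : ℝ := sInf ({1} ∪ {u ∈ Icc (0:ℝ) 1 | v ≤ h u})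

/-- The potential `Φ(hf, hg; u, v) = ∫₀ᵘ hg⁻¹ + ∫₀ᵛ hf⁻¹ − u·v`. -/
def Pot (hf hg : ℝ → ℝ) (u v : ℝ) : ℝ :=
  (∫ x in (0:ℝ)..u, Xinv hg x) + (∫ x in (0:ℝ)..v, Xinv hf x) - u * v

/-- `A(hf, hg) = Φ(hf, hg; 1, 1)`. -/
def Agap (hf hg : ℝ → ℝ) : ℝ := Pot hf hg 1 1

/-- `(u,v)` is a crossing point of `(hf, hg)`:
`u ∈ [hg(v−), hg(v+)]` and `v ∈ [hf(u−), hf(u+)]`. -/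
def IsCrossing (hf hg : ℝ → ℝ) (u v : ℝ) : Prop :=
  u ∈ Icc (0:ℝ) 1 ∧ v ∈ Icc (0:ℝ) 1 ∧
    u ∈ Icc (lm hg v) (rm hg v) ∧ v ∈ Icc (lm hf u) (rm hf u)

/-- The strictly positive gap condition: there is a nontrivial crossing point, and every
nontrivial crossing point satisfies `Φ(hf, hg; u, v) > max {0, A(hf, hg)}`. -/
def StrictPosGap (hf hg : ℝ → ℝ) : Prop :=
  (∃ u v, IsCrossing hf hg u v ∧ ¬(u = 0 ∧ v = 0) ∧ ¬(u = 1 ∧ v = 1)) ∧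
    ∀ u v, IsCrossing hf hg u v → ¬(u = 0 ∧ v = 0) → ¬(u = 1 ∧ v = 1) →
      max 0 (Agap hf hg) < Pot hf hg u v

/-- Membership in `Ψ`: nondecreasing functions `ℝ → [0,1]`. -/
def MemPsi (f : ℝ → ℝ) : Prop := Monotone f ∧ ∀ x, f x ∈ Icc (0:ℝ) 1

/-- `f` is `(a,b)`-interpolating: limits `a` at `−∞` and `b` at `+∞`. -/
def Interpolates (f : ℝ → ℝ) (a b : ℝ) : Prop :=
  Filter.Tendsto f Filter.atBot (nhds a) ∧ Filter.Tendsto f Filter.atTop (nhds b)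

/-!
The potential `Φ` is the density of an energy of pairs of profiles, and a half-step of the coupled
recursion minimizes this energy in one of its two arguments (Fenchel's inequality for the convex
function `∫₀ᵛ h⁻¹`). By the rearrangement inequality the energy of monotone profiles is at least the
integral of `Φ` along them.

Tilt `Φ` by a small linear penalty, let `(a, b)` be a minimizer of the tilted potential, and run the
recursion with a small slack and with values capped at `(a, b)`, starting from step functions. The
profiles decrease but, after subtraction of the far-field energy, their energy stays bounded. Since
`(1, 1)` is the unique minimizer of `Φ`, they can be away from `(1, 1)` only on a stretch of bounded
length. Thanks to the slack, their limit is a subsolution of the original recursion whose values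
eventually come within any prescribed distance of `1`. The greatest fixed point (Knaster–Tarski)
dominates all these subsolutions, so it tends to `1`.
-/

section GeneralizedInverse

variable {h : ℝ → ℝ} {c u v w : ℝ}

/-- The monotone extension to `ℝ` of `h ∈ 𝒳`: it vanishes on the negative axis, in accordance with
the convention `h(0−) = 0`, and is constant on `[1, ∞)`. -/
def extendX (h : ℝ → ℝ) (u : ℝ) : ℝ := if u < 0 then 0 else h (min u 1)

lemma extendX_of_neg (hu : u < 0) : extendX h u = 0 := if_pos hu

lemma extendX_of_mem (hu : u ∈ Icc (0 : ℝ) 1) : extendX h u = h u := by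
  rw [extendX, if_neg hu.1.not_gt, min_eq_left hu.2]

lemma MemX.extendX_mem (hh : MemX h) (u : ℝ) : extendX h u ∈ Icc (0 : ℝ) 1 := by
  unfold extendX
  split_ifs with hu
  · exact ⟨le_rfl, zero_le_one⟩
  · exact hh.2 ⟨le_min (not_lt.1 hu) zero_le_one, min_le_right _ _⟩

lemma MemX.monotone_extendX (hh : MemX h) : Monotone (extendX h) := by
  intro u v huv
  rcases lt_or_ge u 0 with hu | hu
  · rw [extendX_of_neg hu]
    exact (hh.extendX_mem v).1
  · have hv : 0 ≤ v := hu.trans huv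
    rw [extendX, extendX, if_neg hu.not_gt, if_neg hv.not_gt]
    exact hh.1 ⟨le_min hu zero_le_one, min_le_right _ _⟩
      ⟨le_min hv zero_le_one, min_le_right _ _⟩ (min_le_min_right _ huv)

lemma zero_mem_lowerBounds_Xinv (h : ℝ → ℝ) (v : ℝ) :
    0 ∈ lowerBounds ({1} ∪ {u ∈ Icc (0 : ℝ) 1 | v ≤ h u}) := by
  rintro u (rfl | hu)
  · exact zero_le_one
  · exact hu.1.1

lemma Xinv_nonneg (h : ℝ → ℝ) (v : ℝ) : 0 ≤ Xinv h v :=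
  le_csInf ⟨1, Or.inl rfl⟩ (zero_mem_lowerBounds_Xinv h v)

lemma monotone_Xinv (h : ℝ → ℝ) : Monotone (Xinv h) := fun _ _ hvw =>
  csInf_le_csInf ⟨0, zero_mem_lowerBounds_Xinv h _⟩ ⟨1, Or.inl rfl⟩
    (union_subset_union_right _ fun _ hu => ⟨hu.1, hvw.trans hu.2⟩)

lemma Xinv_le (hu : u ∈ Icc (0 : ℝ) 1) (hv : v ≤ h u) : Xinv h v ≤ u :=
  csInf_le ⟨0, zero_mem_lowerBounds_Xinv h v⟩ (Or.inr ⟨hu, hv⟩)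

lemma MemX.le_Xinv (hh : MemX h) (hc : c ≤ 1) (hv : extendX h c < v) : c ≤ Xinv h v := by
  refine le_csInf ⟨1, Or.inl rfl⟩ ?_
  rintro u (rfl | ⟨hu, hvu⟩)
  · exact hc
  · by_contra! huc
    have := hh.monotone_extendX huc.le
    rw [extendX_of_mem hu] at this
    linarith

lemma intervalIntegrable_Xinv (h : ℝ → ℝ) (u v : ℝ) :
    IntervalIntegrable (Xinv h) volume u v :=
  (monotone_Xinv h).intervalIntegrable

/-- The convex function `v ↦ ∫₀ᵛ h⁻¹`, the one-variable constituent of the potential `Φ`. -/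
def invPrimitive (h : ℝ → ℝ) (v : ℝ) : ℝ := ∫ x in (0 : ℝ)..v, Xinv h x

lemma Pot_eq (hf hg : ℝ → ℝ) (u v : ℝ) :
    Pot hf hg u v = invPrimitive hg u + invPrimitive hf v - u * v := rfl

lemma continuous_invPrimitive (h : ℝ → ℝ) : Continuous (invPrimitive h) :=
  intervalIntegral.continuous_primitive (intervalIntegrable_Xinv h) 0

lemma invPrimitive_sub (h : ℝ → ℝ) (u v : ℝ) :
    invPrimitive h v - invPrimitive h u = ∫ x in u..v, Xinv h x :=
  intervalIntegral.integral_interval_sub_left (intervalIntegrable_Xinv h _ _)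
    (intervalIntegrable_Xinv h _ _)

lemma monotone_invPrimitive (h : ℝ → ℝ) : Monotone (invPrimitive h) := fun u v huv => by
  rw [← sub_nonneg, invPrimitive_sub]
  exact intervalIntegral.integral_nonneg huv fun x _ => Xinv_nonneg h x

lemma MemX.mul_sub_le_invPrimitive_sub (hh : MemX h) (hc : c ≤ 1) (hu : extendX h c ≤ u)
    (huv : u ≤ v) : c * (v - u) ≤ invPrimitive h v - invPrimitive h u := by
  have hmono : ∫ _ in u..v, c ≤ ∫ x in u..v, Xinv h x :=
    intervalIntegral.integral_mono_on_of_le_Ioo huv intervalIntegrable_const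
      (intervalIntegrable_Xinv h _ _) fun x hx => hh.le_Xinv hc (hu.trans_lt hx.1)
  rwa [intervalIntegral.integral_const, smul_eq_mul, mul_comm, ← invPrimitive_sub] at hmono

lemma invPrimitive_sub_le_mul_sub (hc : c ≤ 1) (hu : 0 ≤ u) (huv : u ≤ v)
    (hv : v ≤ extendX h c) : invPrimitive h v - invPrimitive h u ≤ c * (v - u) := by
  rcases lt_or_ge c 0 with hc0 | hc0
  · rw [extendX_of_neg hc0] at hv
    obtain rfl : u = v := by linarith
    simp
  · rw [extendX_of_mem ⟨hc0, hc⟩] at hv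
    have hmono : ∫ x in u..v, Xinv h x ≤ ∫ _ in u..v, c :=
      intervalIntegral.integral_mono_on_of_le_Ioo huv (intervalIntegrable_Xinv h _ _)
        intervalIntegrable_const fun x hx => Xinv_le ⟨hc0, hc⟩ (hx.2.le.trans hv)
    rwa [intervalIntegral.integral_const, smul_eq_mul, mul_comm, ← invPrimitive_sub] at hmono

lemma MemX.invPrimitive_sub_mul_min_extendX_le (hh : MemX h) (hc : c ≤ 1) (hv : v ∈ Icc 0 w) :
    invPrimitive h (min w (extendX h c)) - c * min w (extendX h c) ≤
      invPrimitive h v - c * v := by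
  rcases le_total v (min w (extendX h c)) with hle | hge
  · linarith [invPrimitive_sub_le_mul_sub hc hv.1 hle (min_le_right _ _)]
  · rcases min_choice w (extendX h c) with hmin | hmin <;> rw [hmin] at hge ⊢
    · rw [le_antisymm hv.2 hge]
    · linarith [hh.mul_sub_le_invPrimitive_sub hc le_rfl hge]

end GeneralizedInverse

/-- An even probability density on `ℝ`. Integrability is implied by the value of the integral. -/
structure IsEvenDensity (ω : ℝ → ℝ) : Prop where
  even : ∀ x, ω (-x) = ω x
  nonneg : ∀ x, 0 ≤ ω x
  integral_eq_one : ∫ x, ω x = 1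

lemma IsAveragingKernel.isEvenDensity {ω : ℝ → ℝ} (hω : IsAveragingKernel ω) :
    IsEvenDensity ω :=
  ⟨hω.1, hω.2.1, hω.2.2.2.2⟩

/-- The elements of `Ψ`, bundled so that they form a complete lattice. -/
abbrev Profile := ℝ →o unitInterval

section Average

variable {ω : ℝ → ℝ} {R η x : ℝ} {m : unitInterval} {F : Profile}

lemma memPsi_profile (F : Profile) : MemPsi fun x => F x :=
  ⟨F.monotone, fun x => (F x).2⟩

lemma measurable_profile (F : Profile) : Measurable fun x => (F x : ℝ) :=
  (memPsi_profile F).1.measurable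

lemma conv_eq_integral_sub (f ω : ℝ → ℝ) (x : ℝ) : conv f ω x = ∫ y, f (x - y) * ω y := by
  rw [conv, ← integral_sub_left_eq_self _ volume x]
  simp only [sub_sub_cancel]

namespace IsEvenDensity

lemma integrable (hω : IsEvenDensity ω) : Integrable ω :=
  integrable_of_integral_eq_one hω.integral_eq_one

lemma integrable_comp_sub_mul (hω : IsEvenDensity ω) (F : Profile) (x : ℝ) :
    Integrable fun y => (F (x - y) : ℝ) * ω y := by
  refine hω.integrable.bdd_mul (c := 1) ?_ (.of_forall fun y => ?_)
  · exact ((measurable_profile F).comp (measurable_const.sub measurable_id)).aestronglyMeasurable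
  · rw [Real.norm_of_nonneg (F _).2.1]
    exact (F _).2.2

lemma conv_mem (hω : IsEvenDensity ω) (F : Profile) (x : ℝ) :
    conv (fun y => F y) ω x ∈ unitInterval := by
  rw [conv_eq_integral_sub]
  refine ⟨integral_nonneg fun y => mul_nonneg (F _).2.1 (hω.nonneg y), ?_⟩
  rw [← hω.integral_eq_one]
  exact integral_mono (hω.integrable_comp_sub_mul F x) hω.integrable fun y =>
    mul_le_of_le_one_left (hω.nonneg y) (F _).2.2

lemma conv_le_conv (hω : IsEvenDensity ω) {F G : Profile} {x z : ℝ}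
    (hFG : ∀ y, F (x - y) ≤ G (z - y)) :
    conv (fun y => F y) ω x ≤ conv (fun y => G y) ω z := by
  rw [conv_eq_integral_sub, conv_eq_integral_sub]
  exact integral_mono (hω.integrable_comp_sub_mul F x) (hω.integrable_comp_sub_mul G z) fun y =>
    mul_le_mul_of_nonneg_right (hFG y) (hω.nonneg y)

/-- The averaging operator `F ↦ F ⊗ ω` on `Ψ`. -/
def average (hω : IsEvenDensity ω) : Profile →o Profile where
  toFun F :=
    { toFun x := ⟨conv (fun y => F y) ω x, hω.conv_mem F x⟩
      monotone' _ _ hxz := hω.conv_le_conv fun _ => F.monotone (sub_le_sub_right hxz _) }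
  monotone' _ _ hFG _ := hω.conv_le_conv fun _ => hFG _

lemma coe_average (hω : IsEvenDensity ω) (F : Profile) (x : ℝ) :
    (hω.average F x : ℝ) = conv (fun y => F y) ω x := rfl

lemma tendsto_average {ι : Type*} {l : Filter ι} [l.IsCountablyGenerated]
    (hω : IsEvenDensity ω) {F : ι → Profile} {x : ι → ℝ} {f : ℝ → ℝ}
    (hF : ∀ y, Tendsto (fun i => (F i (x i - y) : ℝ)) l (nhds (f y))) :
    Tendsto (fun i => (hω.average (F i) (x i) : ℝ)) l (nhds (∫ y, f y * ω y)) := by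
  simp only [coe_average, conv_eq_integral_sub]
  refine tendsto_integral_filter_of_dominated_convergence ω
    (.of_forall fun i => (hω.integrable_comp_sub_mul (F i) (x i)).aestronglyMeasurable)
    (.of_forall fun i => .of_forall fun y => ?_) hω.integrable
    (.of_forall fun y => (hF y).mul_const _)
  rw [Real.norm_of_nonneg (mul_nonneg (F i _).2.1 (hω.nonneg y))]
  exact mul_le_of_le_one_left (hω.nonneg y) (F i _).2.2

lemma tendsto_average_atBot (hω : IsEvenDensity ω)
    (hF : Tendsto (fun x => (F x : ℝ)) atBot (nhds 0)) :
    Tendsto (fun x => (hω.average F x : ℝ)) atBot (nhds 0) := by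
  simpa using hω.tendsto_average (f := 0) fun y =>
    hF.comp (tendsto_atBot_add_const_right _ (-y) tendsto_id)

lemma tendsto_average_iInf (hω : IsEvenDensity ω) {F : ℕ → Profile} (hF : Antitone F) (x : ℝ) :
    Tendsto (fun n => (hω.average (F n) x : ℝ)) atTop (nhds (hω.average (⨅ n, F n) x)) := by
  rw [coe_average, conv_eq_integral_sub]
  refine hω.tendsto_average fun y => (continuous_subtype_val.tendsto _).comp ?_
  rw [OrderHom.iInf_apply]
  exact tendsto_atTop_iInf fun _ _ hnk => hF hnk _

lemma average_eq_of_eqOn_Icc (hω : IsEvenDensity ω) (hR : ∀ y, R < |y| → ω y = 0)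
    (hF : ∀ y ∈ Icc (x - R) (x + R), F y = m) : hω.average F x = m := by
  have hpoint : ∀ y, (F (x - y) : ℝ) * ω y = m * ω y := fun y => by
    rcases lt_or_ge R |y| with hy | hy
    · simp only [hR y hy, mul_zero]
    · have := abs_le.1 hy
      rw [hF _ ⟨by linarith, by linarith⟩]
  refine Subtype.ext ?_
  simp only [coe_average, conv_eq_integral_sub, hpoint, integral_const_mul, hω.integral_eq_one,
    mul_one]

lemma exists_one_sub_lt_setIntegral_Icc (hω : IsEvenDensity ω) (hη : 0 < η) :
    ∃ R, 0 < R ∧ 1 - η < ∫ y in Icc (-R) R, ω y := by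
  have hlim : Tendsto (fun R : ℝ => ∫ y in -R..R, ω y) atTop (nhds 1) := by
    rw [← hω.integral_eq_one]
    exact intervalIntegral_tendsto_integral hω.integrable tendsto_neg_atTop_atBot tendsto_id
  obtain ⟨R, hlt, hR⟩ :=
    ((hlim.eventually_const_lt (sub_lt_self 1 hη)).and (eventually_gt_atTop 0)).exists
  rw [intervalIntegral.integral_of_le (by linarith), ← integral_Icc_eq_integral_Ioc] at hlt
  exact ⟨R, hR, hlt⟩

/-- The conditional density of `ω` on a window `[-R, R]` of mass close to `1` has finite range, and
its averages exceed those of `ω` only slightly. -/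
lemma exists_finite_range (hω : IsEvenDensity ω) (hη : 0 < η) :
    ∃ (κ : ℝ → ℝ) (R : ℝ) (hκ : IsEvenDensity κ), 0 < R ∧ (∀ y, R < |y| → κ y = 0) ∧
      ∀ (F : Profile) (x : ℝ), (hκ.average F x : ℝ) ≤ hω.average F x + η := by
  obtain ⟨R, hR, hmass⟩ := hω.exists_one_sub_lt_setIntegral_Icc (lt_min hη one_pos)
  set M := ∫ y in Icc (-R) R, ω y
  have hM0 : 0 < M := by linarith [min_le_right η 1]
  have hMη : 1 - η ≤ M := by linarith [min_le_left η 1]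
  set κ : ℝ → ℝ := fun y => M⁻¹ * (Icc (-R) R).indicator ω y with hκdef
  have hκ : IsEvenDensity κ :=
    { even y := by
        simp only [hκdef, indicator, mem_Icc, ← abs_le, abs_neg, hω.even]
      nonneg y := mul_nonneg (inv_nonneg.2 hM0.le) (indicator_nonneg (fun y _ => hω.nonneg y) y)
      integral_eq_one := by
        rw [integral_const_mul, integral_indicator measurableSet_Icc, inv_mul_cancel₀ hM0.ne'] }
  have hκω : ∀ y, M * κ y ≤ ω y := fun y => by
    rw [hκdef, mul_inv_cancel_left₀ hM0.ne']
    exact indicator_le_self' (fun _ _ => hω.nonneg y) y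
  refine ⟨κ, R, hκ, hR, fun y hy => ?_, fun F x => ?_⟩
  · have hy' : y ∉ Icc (-R) R := fun hmem => hy.not_ge (abs_le.2 hmem)
    simp only [hκdef, indicator_of_notMem hy', mul_zero]
  · have hscale : M * (hκ.average F x : ℝ) ≤ hω.average F x := by
      rw [coe_average, coe_average, conv_eq_integral_sub, conv_eq_integral_sub,
        ← integral_const_mul]
      refine integral_mono ((hκ.integrable_comp_sub_mul F x).const_mul M)
        (hω.integrable_comp_sub_mul F x) fun y => ?_
      have := mul_le_mul_of_nonneg_left (hκω y) (F (x - y)).2.1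
      linarith
    nlinarith [(hκ.average F x).2.1, (hκ.average F x).2.2]

end IsEvenDensity

end Average

section Update

variable {h ω κ : ℝ → ℝ} {R L L' η x : ℝ} {m m' : unitInterval} {X : Profile}

/-- The one-sided termination of a profile: its values on the negative axis are reset to `0`. -/
def terminate : Profile →o Profile where
  toFun F :=
    { toFun x := if x < 0 then 0 else F x
      monotone' x y hxy := by
        beta_reduce
        split_ifs with hx hy hy
        · exact le_rfl
        · exact (F y).2.1
        · exact absurd (hxy.trans_lt hy) hx
        · exact F.monotone hxy }
  monotone' F G hFG x := by
    change (if x < 0 then 0 else F x) ≤ if x < 0 then 0 else G x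
    split_ifs
    · exact le_rfl
    · exact hFG x

lemma terminate_of_neg (F : Profile) (hx : x < 0) : terminate F x = 0 := if_pos hx

lemma terminate_of_nonneg (F : Profile) (hx : 0 ≤ x) : terminate F x = F x := if_neg hx.not_gt

lemma terminate_le (F : Profile) : terminate F ≤ F := fun x => by
  rcases lt_or_ge x 0 with hx | hx
  · rw [terminate_of_neg F hx]
    exact (F x).2.1
  · rw [terminate_of_nonneg F hx]

/-- A front: a profile that vanishes on the negative axis and has reached its maximal value `m`
at the point `L`. -/
structure IsFront (m : unitInterval) (L : ℝ) (X : Profile) : Prop where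
  eq_zero : ∀ x < 0, X x = 0
  le : ∀ x, X x ≤ m
  eq : ∀ x, L ≤ x → X x = m

lemma IsFront.mono (hX : IsFront m L X) (hL : L ≤ L') : IsFront m L' X :=
  ⟨hX.eq_zero, hX.le, fun x hx => hX.eq x (hL.trans hx)⟩

lemma isFront_terminate (hL : 0 ≤ L) (hle : ∀ x, X x ≤ m) (heq : ∀ x, L ≤ x → X x = m) :
    IsFront m L (terminate X) where
  eq_zero _ hx := terminate_of_neg X hx
  le x := (terminate_le X x).trans (hle x)
  eq x hx := by rw [terminate_of_nonneg X (hL.trans hx), heq x hx]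

/-- The front that jumps from `0` to `m` at the origin. -/
def stepProfile (m : unitInterval) : Profile := terminate (OrderHom.const ℝ m)

lemma isFront_stepProfile (m : unitInterval) : IsFront m 0 (stepProfile m) :=
  isFront_terminate le_rfl (fun _ => le_rfl) fun _ _ => rfl

lemma IsFront.le_stepProfile (hX : IsFront m L X) : X ≤ stepProfile m := fun x => by
  rcases lt_or_ge x 0 with hx | hx
  · rw [hX.eq_zero x hx]
    exact (stepProfile m x).2.1
  · rw [(isFront_stepProfile m).eq x hx]
    exact hX.le x

/-- The action of `h ∈ 𝒳` on `[0,1]`. -/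
def MemX.response (hh : MemX h) : unitInterval →o unitInterval where
  toFun c := ⟨h c, hh.2 c.2⟩
  monotone' c d hcd := hh.1 c.2 d.2 hcd

/-- The action of `h ∈ 𝒳` on `[0,1]`, with its argument lowered by the slack `η` and its value
capped at `m`. -/
def MemX.cappedResponse (hh : MemX h) (η : ℝ) (m : unitInterval) :
    unitInterval →o unitInterval where
  toFun c := ⟨min m (extendX h (c - η)), le_min m.2.1 (hh.extendX_mem _).1, inf_le_of_left_le m.2.2⟩
  monotone' c d (hcd : (c : ℝ) ≤ d) :=
    min_le_min_left (m : ℝ) (hh.monotone_extendX (sub_le_sub_right hcd η))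

lemma MemX.coe_cappedResponse (hh : MemX h) (η : ℝ) (m c : unitInterval) :
    (hh.cappedResponse η m c : ℝ) = min (m : ℝ) (extendX h (c - η)) := rfl

/-- Averaging followed by the pointwise action of `φ`: one half-step of the recursion. -/
def IsEvenDensity.step (hω : IsEvenDensity ω) (φ : unitInterval →o unitInterval) :
    Profile →o Profile where
  toFun F := φ.comp (hω.average F)
  monotone' _ _ hFG x := φ.monotone (hω.average.monotone hFG x)

lemma IsEvenDensity.step_apply (hω : IsEvenDensity ω) (φ : unitInterval →o unitInterval)
    (F : Profile) (x : ℝ) : hω.step φ F x = φ (hω.average F x) := rfl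

lemma IsEvenDensity.coe_step_response (hω : IsEvenDensity ω) (hh : MemX h) (F : Profile) (x : ℝ) :
    (hω.step hh.response F x : ℝ) = h (conv (fun y => F y) ω x) := rfl

/-- A terminated half-step of the recursion with slack `η` and cap `m`. -/
def IsEvenDensity.cappedStep (hω : IsEvenDensity ω) (hh : MemX h) (η : ℝ) (m : unitInterval) :
    Profile →o Profile :=
  terminate.comp (hω.step (hh.cappedResponse η m))

lemma IsEvenDensity.cappedStep_of_neg (hω : IsEvenDensity ω) (hh : MemX h) (η : ℝ)
    (m : unitInterval) (F : Profile) (hx : x < 0) : hω.cappedStep hh η m F x = 0 :=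
  terminate_of_neg _ hx

lemma IsEvenDensity.cappedStep_of_nonneg (hω : IsEvenDensity ω) (hh : MemX h) (η : ℝ)
    (m : unitInterval) (F : Profile) (hx : 0 ≤ x) :
    hω.cappedStep hh η m F x = hh.cappedResponse η m (hω.average F x) :=
  terminate_of_nonneg _ hx

lemma IsFront.cappedStep (hX : IsFront m' L X) (hκ : IsEvenDensity κ)
    (hR : ∀ y, R < |y| → κ y = 0) (hLR : 0 ≤ L + R) (hh : MemX h)
    (hm : (m : ℝ) ≤ extendX h (m' - η)) : IsFront m (L + R) (hκ.cappedStep hh η m X) := by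
  refine isFront_terminate hLR (fun x => min_le_left (m : ℝ) _) fun x hx => Subtype.ext ?_
  have hfar : hκ.average X x = m' :=
    hκ.average_eq_of_eqOn_Icc hR fun y hy => hX.eq y (by linarith [hy.1])
  rw [hκ.step_apply, hfar, hh.coe_cappedResponse, min_eq_left hm]

end Update

section Symmetrization

variable {κ : ℝ → ℝ} {s : Set ℝ} {W : ℝ × ℝ → ℝ} {C R L M x y : ℝ} {F G : Profile}
  {a b : unitInterval}

/-- Exchanging the two variables leaves only the symmetric part of `K`. -/
lemma integral_prod_self_nonneg {α : Type*} [MeasurableSpace α] {μ : Measure α} [SFinite μ]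
    {K : α × α → ℝ} (hK : Integrable K (μ.prod μ)) (hsymm : ∀ᵐ z ∂μ.prod μ, 0 ≤ K z + K z.swap) :
    0 ≤ ∫ z, K z ∂μ.prod μ := by
  have hsum : 0 ≤ ∫ z, (K z + (K ∘ Prod.swap) z) ∂μ.prod μ := integral_nonneg_of_ae hsymm
  rw [integral_add hK hK.swap] at hsum
  have hswap : ∫ z, (K ∘ Prod.swap) z ∂μ.prod μ = ∫ z, K z ∂μ.prod μ := integral_prod_swap K
  linarith

lemma integrableOn_of_mem_unitInterval {f : ℝ → ℝ} (hf : Measurable f)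
    (hf' : ∀ x, f x ∈ unitInterval) (hs : volume s ≠ ⊤) : IntegrableOn f s :=
  Measure.integrableOn_of_bounded (M := 1) hs hf.aestronglyMeasurable
    (.of_forall fun x => by simpa only [Real.norm_of_nonneg (hf' x).1] using (hf' x).2)

lemma neg_or_le_of_notMem_Ico (hR : ∀ y, R < |y| → κ y = 0) (hM : L + R ≤ M)
    (hx : x ∈ Ico 0 M) (hy : y ∉ Ico 0 M) (hxy : κ (x - y) ≠ 0) : y < 0 ∨ L ≤ x ∧ L ≤ y := by
  refine or_iff_not_imp_left.2 fun hneg => ?_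
  have hyM : M ≤ y := not_lt.1 fun hlt => hy ⟨not_lt.1 hneg, hlt⟩
  have habs : |x - y| ≤ R := not_lt.1 (mt (hR _) hxy)
  have hxL : L ≤ x := by linarith [(abs_le.1 habs).1]
  exact ⟨hxL, by linarith [hx.2]⟩

namespace IsEvenDensity

lemma integrable_prod_sub_mul (hκ : IsEvenDensity κ) (hs : volume s ≠ ⊤) (hW : Measurable W)
    (hbdd : ∀ z, |W z| ≤ C) :
    Integrable (fun z : ℝ × ℝ => κ (z.1 - z.2) * W z) ((volume.restrict s).prod volume) := by
  have : IsFiniteMeasure (volume.restrict s) := isFiniteMeasure_restrict.2 hs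
  have hbase := (integrable_const (μ := volume.restrict s) (1 : ℝ)).mul_prod hκ.integrable
  have hmp := measurePreserving_prod_sub (volume.restrict s) volume
  refine Integrable.mul_bdd (c := C) ?_ hW.aestronglyMeasurable (.of_forall hbdd)
  refine (hmp.integrable_comp_of_integrable hbase).congr (.of_forall fun z => ?_)
  simp only [Function.comp_apply, one_mul, ← hκ.even (z.1 - z.2), neg_sub]

lemma setIntegral_integral_nonneg (hκ : IsEvenDensity κ) (hs : MeasurableSet s)
    (hs' : volume s ≠ ⊤) (hW : Measurable W) (hbdd : ∀ z, |W z| ≤ C)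
    (hin : ∀ x ∈ s, ∀ y ∈ s, 0 ≤ W (x, y) + W (y, x))
    (hout : ∀ x ∈ s, ∀ y ∉ s, 0 ≤ κ (x - y) * W (x, y)) :
    0 ≤ ∫ x in s, ∫ y, κ (x - y) * W (x, y) := by
  set K : ℝ × ℝ → ℝ := fun z => κ (z.1 - z.2) * W z
  have hK : Integrable K ((volume.restrict s).prod volume) :=
    hκ.integrable_prod_sub_mul hs' hW hbdd
  have hrestrict (t : Set ℝ) : ((volume.restrict s).prod volume).restrict (univ ×ˢ t) =
      (volume.restrict s).prod (volume.restrict t) := by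
    rw [← Measure.prod_restrict, Measure.restrict_univ]
  have hmem {t : Set ℝ} (ht : MeasurableSet t) :
      ∀ᵐ z ∂(volume.restrict s).prod (volume.restrict t), z ∈ s ×ˢ t := by
    rw [Measure.prod_restrict]
    exact ae_restrict_mem (hs.prod ht)
  have hinside : 0 ≤ ∫ z, K z ∂(volume.restrict s).prod (volume.restrict s) := by
    refine integral_prod_self_nonneg (hrestrict s ▸ hK.restrict) ((hmem hs).mono fun z hz => ?_)
    have heven : κ (z.2 - z.1) = κ (z.1 - z.2) := by rw [← hκ.even, neg_sub]
    simp only [K, Prod.fst_swap, Prod.snd_swap, heven, ← mul_add]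
    exact mul_nonneg (hκ.nonneg _) (hin _ hz.1 _ hz.2)
  have houtside : 0 ≤ ∫ z, K z ∂(volume.restrict s).prod (volume.restrict sᶜ) :=
    integral_nonneg_of_ae ((hmem hs.compl).mono fun z hz => hout _ hz.1 _ hz.2)
  have hcompl : (univ ×ˢ s : Set (ℝ × ℝ))ᶜ = univ ×ˢ sᶜ := by
    simp only [compl_prod_eq_union, compl_univ, empty_prod, empty_union]
  rw [← integral_prod K hK, ← integral_add_compl (MeasurableSet.univ.prod hs) hK, hcompl,
    hrestrict, hrestrict]
  exact add_nonneg hinside houtside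

lemma integrable_sub_mul (hκ : IsEvenDensity κ) (F : Profile) (x : ℝ) :
    Integrable fun y => κ (x - y) * F y := by
  simpa only [sub_sub_cancel, mul_comm] using
    (hκ.integrable_comp_sub_mul F x).comp_sub_left x

lemma integral_sub_mul (hκ : IsEvenDensity κ) (F : Profile) (x : ℝ) :
    ∫ y, κ (x - y) * F y = hκ.average F x := by
  simp only [coe_average, conv, mul_comm]

lemma setIntegral_mul_average_le (hκ : IsEvenDensity κ) (hs : MeasurableSet s)
    (hs' : volume s ≠ ⊤) {φ ψ : ℝ → ℝ} (hφ : Measurable φ) (hψ : Measurable ψ)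
    (hφ' : ∀ x, φ x ∈ unitInterval) (hψ' : ∀ x, ψ x ∈ unitInterval) (F G : Profile)
    (hin : ∀ x ∈ s, ∀ y ∈ s, ψ x * G y + ψ y * G x ≤ φ x * F y + φ y * F x)
    (hout : ∀ x ∈ s, ∀ y ∉ s, κ (x - y) ≠ 0 → ψ x * G y ≤ φ x * F y) :
    ∫ x in s, ψ x * hκ.average G x ≤ ∫ x in s, φ x * hκ.average F x := by
  have hintegrable {χ : ℝ → ℝ} (hχ : Measurable χ) (hχ' : ∀ x, χ x ∈ unitInterval) (H : Profile) :
      IntegrableOn (fun x => χ x * hκ.average H x) s :=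
    integrableOn_of_mem_unitInterval (hχ.mul (measurable_profile _))
      (fun x => unitInterval.mul_mem (hχ' x) (hκ.average H x).2) hs'
  have hinner (x : ℝ) : φ x * hκ.average F x - ψ x * hκ.average G x =
      ∫ y, κ (x - y) * (φ x * F y - ψ x * G y) := by
    rw [← hκ.integral_sub_mul, ← hκ.integral_sub_mul, ← integral_const_mul, ← integral_const_mul,
      ← integral_sub ((hκ.integrable_sub_mul F x).const_mul _)
        ((hκ.integrable_sub_mul G x).const_mul _)]
    exact integral_congr_ae (.of_forall fun y => by ring)
  rw [← sub_nonneg, ← integral_sub (hintegrable hφ hφ' F) (hintegrable hψ hψ' G)]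
  simp only [hinner]
  refine hκ.setIntegral_integral_nonneg (C := 1) (W := fun z => φ z.1 * F z.2 - ψ z.1 * G z.2)
    hs hs' ?_ (fun z => ?_) (fun x hx y hy => ?_) (fun x hx y hy => ?_)
  · exact ((hφ.comp measurable_fst).mul ((measurable_profile F).comp measurable_snd)).sub
      ((hψ.comp measurable_fst).mul ((measurable_profile G).comp measurable_snd))
  · have hφF := unitInterval.mul_mem (hφ' z.1) (F z.2).2
    have hψG := unitInterval.mul_mem (hψ' z.1) (G z.2).2
    exact abs_le.2 ⟨by linarith [hφF.1, hψG.2], by linarith [hφF.2, hψG.1]⟩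
  · linarith [hin x hx y hy]
  · by_cases hxy : κ (x - y) = 0
    · rw [hxy, zero_mul]
    · exact mul_nonneg (hκ.nonneg _) (sub_nonneg.2 (hout x hx y hy hxy))

/-- For monotone `F` and `G` the symmetrized difference of the integrands is
`(F x - F y) * (G x - G y)`. -/
lemma setIntegral_mul_average_le_setIntegral_mul (hκ : IsEvenDensity κ)
    (hR : ∀ y, R < |y| → κ y = 0) (F : Profile) (hG : IsFront a L G) (hM : L + R ≤ M) :
    ∫ x in Ico 0 M, (F x : ℝ) * hκ.average G x ≤ ∫ x in Ico 0 M, (F x : ℝ) * G x := by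
  have htopval (x : ℝ) : ((⊤ : Profile) x : ℝ) = 1 := rfl
  have htop (x : ℝ) : (hκ.average ⊤ x : ℝ) = 1 := by
    rw [hκ.average_eq_of_eqOn_Icc (m := 1) hR fun _ _ => rfl, Icc.coe_one]
  have hsymm := hκ.setIntegral_mul_average_le (s := Ico 0 M) (φ := fun x => F x * G x)
    (ψ := fun x => F x) measurableSet_Ico (by simp)
    ((measurable_profile F).mul (measurable_profile G)) (measurable_profile F)
    (fun x => unitInterval.mul_mem (F x).2 (G x).2) (fun x => (F x).2) ⊤ G ?_ ?_
  · simpa only [htop, mul_one] using hsymm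
  · intro x _ y _
    have hmono : 0 ≤ ((F x : ℝ) - F y) * (G x - G y) := by
      rcases le_total x y with hxy | hxy
      · exact mul_nonneg_of_nonpos_of_nonpos (sub_nonpos.2 (F.monotone hxy))
          (sub_nonpos.2 (G.monotone hxy))
      · exact mul_nonneg (sub_nonneg.2 (F.monotone hxy)) (sub_nonneg.2 (G.monotone hxy))
    rw [htopval, htopval]
    linarith
  · intro x hx y hy hxy
    have hyx : G y ≤ G x := by
      rcases neg_or_le_of_notMem_Ico hR hM hx hy hxy with hneg | ⟨hxL, hyL⟩
      · exact G.monotone (hneg.le.trans hx.1)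
      · rw [hG.eq x hxL, hG.eq y hyL]
    rw [htopval, mul_one]
    exact mul_le_mul_of_nonneg_left hyx (F x).2.1

lemma setIntegral_mul_average_comm (hκ : IsEvenDensity κ) (hR : ∀ y, R < |y| → κ y = 0)
    (hF : IsFront b L F) (hG : IsFront a L G) (hM : L + R ≤ M) :
    ∫ x in Ico 0 M, (F x : ℝ) * hκ.average G x = ∫ x in Ico 0 M, (G x : ℝ) * hκ.average F x := by
  have houtside {x y : ℝ} (hx : x ∈ Ico 0 M) (hy : y ∉ Ico 0 M) (hxy : κ (x - y) ≠ 0) :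
      (F x : ℝ) * G y = G x * F y := by
    rcases neg_or_le_of_notMem_Ico hR hM hx hy hxy with hneg | ⟨hxL, hyL⟩
    · rw [hF.eq_zero y hneg, hG.eq_zero y hneg, Icc.coe_zero, mul_zero, mul_zero]
    · rw [hF.eq x hxL, hF.eq y hyL, hG.eq x hxL, hG.eq y hyL, mul_comm]
  refine le_antisymm ?_ ?_
  · exact hκ.setIntegral_mul_average_le measurableSet_Ico (by simp) (measurable_profile G)
      (measurable_profile F) (fun x => (G x).2) (fun x => (F x).2) F G
      (fun x _ y _ => by linarith) fun x hx y hy hxy => (houtside hx hy hxy).le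
  · exact hκ.setIntegral_mul_average_le measurableSet_Ico (by simp) (measurable_profile F)
      (measurable_profile G) (fun x => (F x).2) (fun x => (G x).2) G F
      (fun x _ y _ => by linarith) fun x hx y hy hxy => (houtside hx hy hxy).ge

end IsEvenDensity

end Symmetrization

section Energy

variable {hf hg κ : ℝ → ℝ} {R L M η : ℝ} {F G : Profile} {a b : unitInterval}

/-- The potential `Φ` with a linear penalty of slope `η`. -/
def tiltedPot (hf hg : ℝ → ℝ) (η u v : ℝ) : ℝ := Pot hf hg u v + η * (u + v)

/-- The energy of a site with values `u` and `v`, where `v` interacts with the averaged value `w`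
instead of `u` itself. -/
def siteEnergy (hf hg : ℝ → ℝ) (η u v w : ℝ) : ℝ :=
  invPrimitive hg u + invPrimitive hf v + η * (u + v) - v * w

/-- The energy of a pair of profiles in the window `[0, M)`. -/
def IsEvenDensity.energy (hκ : IsEvenDensity κ) (hf hg : ℝ → ℝ) (η M : ℝ) (F G : Profile) : ℝ :=
  ∫ x in Ico 0 M, siteEnergy hf hg η (G x) (F x) (hκ.average G x)

lemma tiltedPot_eq_siteEnergy (hf hg : ℝ → ℝ) (η u v : ℝ) :
    tiltedPot hf hg η u v = siteEnergy hf hg η u v u := by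
  rw [tiltedPot, siteEnergy, Pot_eq]
  ring

lemma integrableOn_Ico_of_monotone {f : ℝ → ℝ} (hf : Monotone f) (a b : ℝ) :
    IntegrableOn f (Ico a b) :=
  ((hf.monotoneOn _).integrableOn_isCompact isCompact_Icc).mono_set Ico_subset_Icc_self

lemma monotone_mul_profile (F G : Profile) : Monotone fun x => (F x : ℝ) * G x :=
  (memPsi_profile F).1.mul (memPsi_profile G).1 (fun x => (F x).2.1) fun x => (G x).2.1

lemma integrableOn_siteEnergy_zero (hf hg : ℝ → ℝ) (η M : ℝ) (F G : Profile) :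
    IntegrableOn (fun x => siteEnergy hf hg η (G x) (F x) 0) (Ico 0 M) := by
  have hF := (memPsi_profile F).1
  have hG := (memPsi_profile G).1
  simp only [siteEnergy, mul_zero, sub_zero]
  exact (integrableOn_Ico_of_monotone (((monotone_invPrimitive hg).comp hG).add
    ((monotone_invPrimitive hf).comp hF)) 0 M).add
      ((integrableOn_Ico_of_monotone (hG.add hF) 0 M).const_mul η)

lemma integrableOn_siteEnergy (hf hg : ℝ → ℝ) (η M : ℝ) (F G H : Profile) :
    IntegrableOn (fun x => siteEnergy hf hg η (G x) (F x) (H x)) (Ico 0 M) := by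
  have hsub := (integrableOn_siteEnergy_zero hf hg η M F G).sub
    (integrableOn_Ico_of_monotone (monotone_mul_profile F H) 0 M)
  simpa only [siteEnergy, mul_zero, sub_zero, Pi.sub_def] using hsub

lemma setIntegral_siteEnergy (hf hg : ℝ → ℝ) (η M : ℝ) (F G H : Profile) :
    ∫ x in Ico 0 M, siteEnergy hf hg η (G x) (F x) (H x) =
      (∫ x in Ico 0 M, siteEnergy hf hg η (G x) (F x) 0) - ∫ x in Ico 0 M, (F x : ℝ) * H x := by
  rw [← integral_sub (integrableOn_siteEnergy_zero hf hg η M F G)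
    (integrableOn_Ico_of_monotone (monotone_mul_profile F H) 0 M)]
  simp only [siteEnergy, mul_zero, sub_zero]

lemma MemX.siteEnergy_cappedResponse_le (hhf : MemX hf) (hg : ℝ → ℝ) (hη : 0 ≤ η) (u : ℝ)
    {v : unitInterval} (hv : v ≤ b) (w : unitInterval) :
    siteEnergy hf hg η u (hhf.cappedResponse η b w) w ≤ siteEnergy hf hg η u v w := by
  have hc : (w : ℝ) - η ≤ 1 := by linarith [w.2.2]
  have hfenchel := hhf.invPrimitive_sub_mul_min_extendX_le hc (w := b) ⟨v.2.1, hv⟩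
  rw [← hhf.coe_cappedResponse] at hfenchel
  simp only [siteEnergy]
  linarith

namespace IsEvenDensity

lemma setIntegral_tiltedPot_le_energy (hκ : IsEvenDensity κ) (hR : ∀ y, R < |y| → κ y = 0)
    (hf hg : ℝ → ℝ) (η : ℝ) (F : Profile) (hG : IsFront a L G) (hM : L + R ≤ M) :
    ∫ x in Ico 0 M, tiltedPot hf hg η (G x) (F x) ≤ hκ.energy hf hg η M F G := by
  simp only [tiltedPot_eq_siteEnergy]
  rw [energy, setIntegral_siteEnergy, setIntegral_siteEnergy]
  exact sub_le_sub_left (hκ.setIntegral_mul_average_le_setIntegral_mul hR F hG hM) _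

lemma energy_comm (hκ : IsEvenDensity κ) (hR : ∀ y, R < |y| → κ y = 0) (hf hg : ℝ → ℝ) (η : ℝ)
    (hF : IsFront b L F) (hG : IsFront a L G) (hM : L + R ≤ M) :
    hκ.energy hf hg η M F G = hκ.energy hg hf η M G F := by
  rw [energy, energy, setIntegral_siteEnergy, setIntegral_siteEnergy,
    hκ.setIntegral_mul_average_comm hR hF hG hM]
  simp only [siteEnergy, mul_zero, sub_zero, add_comm]

lemma energy_cappedStep_left_le (hκ : IsEvenDensity κ) (hhf : MemX hf) (hg : ℝ → ℝ)
    (hη : 0 ≤ η) (M : ℝ) (hF : ∀ x, F x ≤ b) (G : Profile) :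
    hκ.energy hf hg η M (hκ.cappedStep hhf η b G) G ≤ hκ.energy hf hg η M F G := by
  refine setIntegral_mono_on (integrableOn_siteEnergy _ _ _ _ _ _ _)
    (integrableOn_siteEnergy _ _ _ _ _ _ _) measurableSet_Ico fun x hx => ?_
  rw [hκ.cappedStep_of_nonneg hhf η b G hx.1]
  exact hhf.siteEnergy_cappedResponse_le hg hη _ (hF x) _

lemma energy_cappedStep_right_le (hκ : IsEvenDensity κ) (hR : ∀ y, R < |y| → κ y = 0)
    (hf : ℝ → ℝ) (hhg : MemX hg) (hη : 0 ≤ η) (hF : IsFront b L F) (hG : IsFront a L G)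
    (hG' : IsFront a L (hκ.cappedStep hhg η a F)) (hM : L + R ≤ M) :
    hκ.energy hf hg η M F (hκ.cappedStep hhg η a F) ≤ hκ.energy hf hg η M F G := by
  rw [hκ.energy_comm hR hf hg η hF hG' hM, hκ.energy_comm hR hf hg η hF hG hM]
  exact hκ.energy_cappedStep_left_le hhg hf hη M hG.le F

end IsEvenDensity

lemma integrableOn_Ico_indicator_const (r d : ℝ) :
    IntegrableOn ((Ico 0 r).indicator fun _ => d) (Ico 0 M) :=
  (integrableOn_const (by simp)).indicator measurableSet_Ico

lemma setIntegral_Ico_add_indicator {r : ℝ} (hr : 0 ≤ r) (hrM : r ≤ M) (c d : ℝ) :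
    ∫ x in Ico 0 M, (c + (Ico 0 r).indicator (fun _ => d) x) = M * c + r * d := by
  rw [integral_add (integrable_const c) (integrableOn_Ico_indicator_const r d),
    setIntegral_indicator measurableSet_Ico,
    inter_eq_self_of_subset_right (Ico_subset_Ico_right hrM)]
  simp only [setIntegral_const, Real.volume_real_Ico_of_le hr,
    Real.volume_real_Ico_of_le (hr.trans hrM), sub_zero, smul_eq_mul]

lemma IsEvenDensity.energy_stepProfile_le (hκ : IsEvenDensity κ) (hR : ∀ y, R < |y| → κ y = 0)
    (hR0 : 0 ≤ R) (hRM : R ≤ M) (hf hg : ℝ → ℝ) (η : ℝ) (a b : unitInterval) :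
    hκ.energy hf hg η M (stepProfile b) (stepProfile a) ≤ M * tiltedPot hf hg η a b + R := by
  rw [← mul_one R, ← setIntegral_Ico_add_indicator hR0 hRM]
  refine setIntegral_mono_on (integrableOn_siteEnergy _ _ _ _ _ _ _)
    ((integrable_const _).add (integrableOn_Ico_indicator_const R 1))
    measurableSet_Ico fun x hx => ?_
  rw [(isFront_stepProfile a).eq x hx.1, (isFront_stepProfile b).eq x hx.1,
    tiltedPot_eq_siteEnergy]
  rcases lt_or_ge x R with hxR | hxR
  · have hmem : x ∈ Ico 0 R := ⟨hx.1, hxR⟩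
    have hba := (unitInterval.mul_mem b.2 a.2).2
    have hnonneg := mul_nonneg b.2.1 (hκ.average (stepProfile a) x).2.1
    rw [indicator_of_mem hmem, siteEnergy, siteEnergy]
    linarith
  · have hmem : x ∉ Ico 0 R := fun hx' => hx'.2.not_ge hxR
    have hfar : hκ.average (stepProfile a) x = a := hκ.average_eq_of_eqOn_Icc hR fun y hy =>
      (isFront_stepProfile a).eq y (by linarith [hy.1])
    rw [hfar, indicator_of_notMem hmem, add_zero]

end Energy

/-- A far field of the recursion with slack `η`: caps `(a, b)` that are maintained by the slackened
responses and that minimize the tilted potential among all smaller pairs. -/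
structure IsFarField (hf hg : ℝ → ℝ) (η : ℝ) (a b : unitInterval) : Prop where
  le_extendX_left : (a : ℝ) ≤ extendX hg (b - η)
  le_extendX_right : (b : ℝ) ≤ extendX hf (a - η)
  tiltedPot_le : ∀ u ≤ a, ∀ v ≤ b, tiltedPot hf hg η a b ≤ tiltedPot hf hg η u v

section FarField

variable {h hf hg : ℝ → ℝ} {η : ℝ} {m : unitInterval}

lemma MemX.le_extendX_of_tilted_min (hh : MemX h) (hη : 0 < η) {a b : unitInterval}
    (hmin : ∀ u : unitInterval,
      invPrimitive h a - a * b + 2 * η * a ≤ invPrimitive h u - u * b + 2 * η * u) :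
    (a : ℝ) ≤ extendX h (b - η) := by
  have hc : (b : ℝ) - η ≤ 1 := by linarith [b.2.2]
  have hfenchel := hh.invPrimitive_sub_mul_min_extendX_le hc (w := a) ⟨a.2.1, le_rfl⟩
  have htilted := hmin (hh.cappedResponse η a b)
  rw [hh.coe_cappedResponse] at htilted
  have hle : η * a ≤ η * min (a : ℝ) (extendX h (b - η)) := by linarith
  exact (le_of_mul_le_mul_left hle hη).trans (min_le_right _ _)

lemma continuous_tiltedPot (hf hg : ℝ → ℝ) (η : ℝ) :
    Continuous fun p : unitInterval × unitInterval => tiltedPot hf hg η p.1 p.2 := by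
  have := continuous_invPrimitive hf
  have := continuous_invPrimitive hg
  simp only [tiltedPot, Pot_eq]
  fun_prop

/-- Halving the slope of the tilt at a minimizer provides the slack. -/
lemma exists_isFarField (hhf : MemX hf) (hhg : MemX hg) (hη : 0 < η) :
    ∃ a b, IsFarField hf hg η a b ∧
      ∀ u v : unitInterval, tiltedPot hf hg (2 * η) a b ≤ tiltedPot hf hg (2 * η) u v := by
  obtain ⟨⟨a, b⟩, -, hmin⟩ := isCompact_univ.exists_isMinOn univ_nonempty
    (continuous_tiltedPot hf hg (2 * η)).continuousOn
  have hmin' (u v : unitInterval) : tiltedPot hf hg (2 * η) a b ≤ tiltedPot hf hg (2 * η) u v :=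
    hmin (mem_univ (u, v))
  refine ⟨a, b, ⟨?_, ?_, fun u hu v hv => ?_⟩, hmin'⟩
  · refine hhg.le_extendX_of_tilted_min hη fun u => ?_
    have := hmin' u b
    simp only [tiltedPot, Pot_eq] at this
    linarith
  · refine hhf.le_extendX_of_tilted_min hη fun v => ?_
    have := hmin' a v
    simp only [tiltedPot, Pot_eq] at this
    linarith
  · have hsum : η * ((u : ℝ) + v) ≤ η * (a + b) :=
      mul_le_mul_of_nonneg_left (add_le_add hu hv) hη.le
    have := hmin' u v
    simp only [tiltedPot] at this ⊢
    linarith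

lemma exists_gap_of_unique_min
    (hmin : ∀ u ∈ Icc (0 : ℝ) 1, ∀ v ∈ Icc (0 : ℝ) 1, ¬(u = 1 ∧ v = 1) →
      Pot hf hg 1 1 < Pot hf hg u v) (hm : m < 1) :
    ∃ δ > 0, ∀ u v : unitInterval, u ≤ m ∨ v ≤ m → Pot hf hg 1 1 + δ ≤ Pot hf hg u v := by
  have hclosed : IsClosed {p : unitInterval × unitInterval | p.1 ≤ m ∨ p.2 ≤ m} :=
    (isClosed_Iic.preimage continuous_fst).union (isClosed_Iic.preimage continuous_snd)
  have hcont : Continuous fun p : unitInterval × unitInterval => Pot hf hg p.1 p.2 := by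
    simpa only [tiltedPot, zero_mul, add_zero] using continuous_tiltedPot hf hg 0
  obtain ⟨⟨a, b⟩, hab, hle⟩ :=
    hclosed.isCompact.exists_isMinOn ⟨(m, m), Or.inl le_rfl⟩ hcont.continuousOn
  have hne : ¬((a : ℝ) = 1 ∧ (b : ℝ) = 1) := by
    rintro ⟨ha, hb⟩
    rcases hab with ham | hbm
    · exact (ham.trans_lt hm).ne (Subtype.ext ha)
    · exact (hbm.trans_lt hm).ne (Subtype.ext hb)
  refine ⟨Pot hf hg a b - Pot hf hg 1 1, sub_pos.2 (hmin a a.2 b b.2 hne), fun u v huv => ?_⟩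
  rw [add_sub_cancel]
  exact hle (a := (u, v)) huv

end FarField

section FrontSequence

variable {hf hg κ : ℝ → ℝ} {R M η δ x : ℝ} {a b m : unitInterval}

namespace IsEvenDensity

/-- The `F`-component of the recursion with slack `η` and caps `b`, `a`, started from the front that
jumps to `b`. -/
def frontSeq (hκ : IsEvenDensity κ) (hhf : MemX hf) (hhg : MemX hg) (η : ℝ) (a b : unitInterval)
    (n : ℕ) : Profile :=
  ((hκ.cappedStep hhf η b).comp (hκ.cappedStep hhg η a))^[n] (stepProfile b)

lemma frontSeq_succ (hκ : IsEvenDensity κ) (hhf : MemX hf) (hhg : MemX hg) (η : ℝ)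
    (a b : unitInterval) (n : ℕ) :
    hκ.frontSeq hhf hhg η a b (n + 1) =
      hκ.cappedStep hhf η b (hκ.cappedStep hhg η a (hκ.frontSeq hhf hhg η a b n)) :=
  Function.iterate_succ_apply' _ _ _

end IsEvenDensity

namespace IsFarField

lemma isFront_frontSeq (hab : IsFarField hf hg η a b) (hκ : IsEvenDensity κ) (hR0 : 0 ≤ R)
    (hR : ∀ y, R < |y| → κ y = 0) (hhf : MemX hf) (hhg : MemX hg) (n : ℕ) :
    IsFront b (2 * n * R) (hκ.frontSeq hhf hhg η a b n) ∧
      IsFront a (2 * n * R + R) (hκ.cappedStep hhg η a (hκ.frontSeq hhf hhg η a b n)) := by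
  have hfront : IsFront b (2 * n * R) (hκ.frontSeq hhf hhg η a b n) := by
    induction n with
    | zero => simpa using! isFront_stepProfile b
    | succ n ih =>
      rw [hκ.frontSeq_succ]
      convert! (ih.cappedStep hκ hR (by positivity) hhg hab.le_extendX_left).cappedStep hκ hR
        (by positivity) hhf hab.le_extendX_right using 1
      push_cast
      ring
  exact ⟨hfront, hfront.cappedStep hκ hR (by positivity) hhg hab.le_extendX_left⟩

lemma antitone_frontSeq (hab : IsFarField hf hg η a b) (hκ : IsEvenDensity κ) (hR0 : 0 ≤ R)
    (hR : ∀ y, R < |y| → κ y = 0) (hhf : MemX hf) (hhg : MemX hg) :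
    Antitone (hκ.frontSeq hhf hhg η a b) :=
  Monotone.antitone_iterate_of_map_le (OrderHom.monotone _)
    (hab.isFront_frontSeq hκ hR0 hR hhf hhg 1).1.le_stepProfile

lemma energy_frontSeq_le (hab : IsFarField hf hg η a b) (hκ : IsEvenDensity κ) (hR0 : 0 ≤ R)
    (hR : ∀ y, R < |y| → κ y = 0) (hhf : MemX hf) (hhg : MemX hg) (hη : 0 ≤ η) {n : ℕ}
    (hM : 2 * n * R + 2 * R ≤ M) :
    hκ.energy hf hg η M (hκ.frontSeq hhf hhg η a b n)
        (hκ.cappedStep hhg η a (hκ.frontSeq hhf hhg η a b n)) ≤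
      M * tiltedPot hf hg η a b + R := by
  have hfronts := hab.isFront_frontSeq hκ hR0 hR hhf hhg
  induction n with
  | zero =>
    obtain ⟨hF, hG⟩ := hfronts 0
    simp only [Nat.cast_zero, mul_zero, zero_mul, zero_add] at hM hF hG
    calc _ ≤ hκ.energy hf hg η M (stepProfile b) (stepProfile a) :=
          hκ.energy_cappedStep_right_le hR hf hhg hη (hF.mono hR0)
            ((isFront_stepProfile a).mono hR0) hG (by linarith)
      _ ≤ _ := hκ.energy_stepProfile_le hR hR0 (by linarith) hf hg η a b
  | succ n ih =>
    obtain ⟨hF', hG'⟩ := hfronts (n + 1)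
    push_cast at hM hF' hG'
    obtain ⟨hF, hG⟩ := hfronts n
    calc _ ≤ hκ.energy hf hg η M (hκ.frontSeq hhf hhg η a b (n + 1))
            (hκ.cappedStep hhg η a (hκ.frontSeq hhf hhg η a b n)) :=
          hκ.energy_cappedStep_right_le hR hf hhg hη (hF'.mono (by linarith))
            (hG.mono (by linarith)) hG' (by linarith)
      _ ≤ hκ.energy hf hg η M (hκ.frontSeq hhf hhg η a b n)
            (hκ.cappedStep hhg η a (hκ.frontSeq hhf hhg η a b n)) := by
          rw [hκ.frontSeq_succ]
          exact hκ.energy_cappedStep_left_le hhf hg hη M hF.le _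
      _ ≤ _ := ih (by linarith)

/-- Since the potential is at least its far-field value everywhere, an excess `δ` on a stretch of
length `x` costs energy `x * δ`, while only `R` is available. -/
lemma mul_le_of_gap (hab : IsFarField hf hg η a b) (hκ : IsEvenDensity κ) (hR0 : 0 ≤ R)
    (hR : ∀ y, R < |y| → κ y = 0) (hhf : MemX hf) (hhg : MemX hg) (hη : 0 ≤ η) (n : ℕ) (hx : 0 ≤ x)
    (hgap : ∀ y ∈ Ico 0 x, tiltedPot hf hg η a b + δ ≤
      tiltedPot hf hg η (hκ.cappedStep hhg η a (hκ.frontSeq hhf hhg η a b n) y)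
        (hκ.frontSeq hhf hhg η a b n y)) :
    x * δ ≤ R := by
  obtain ⟨hF, hG⟩ := hab.isFront_frontSeq hκ hR0 hR hhf hhg n
  set F := hκ.frontSeq hhf hhg η a b n
  set G := hκ.cappedStep hhg η a F
  set M := max x (2 * n * R + 2 * R)
  have hM : 2 * n * R + 2 * R ≤ M := le_max_right _ _
  have henergy : M * tiltedPot hf hg η a b + x * δ ≤ M * tiltedPot hf hg η a b + R :=
    calc M * tiltedPot hf hg η a b + x * δ
        = ∫ y in Ico 0 M, (tiltedPot hf hg η a b + (Ico 0 x).indicator (fun _ => δ) y) :=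
          (setIntegral_Ico_add_indicator hx (le_max_left _ _) _ _).symm
      _ ≤ ∫ y in Ico 0 M, tiltedPot hf hg η (G y) (F y) := by
          refine setIntegral_mono_on
            ((integrable_const _).add (integrableOn_Ico_indicator_const x δ)) ?_
            measurableSet_Ico fun y _ => ?_
          · simpa only [tiltedPot_eq_siteEnergy] using integrableOn_siteEnergy hf hg η M F G G
          · by_cases hy : y ∈ Ico 0 x
            · rw [indicator_of_mem hy]
              exact hgap y hy
            · rw [indicator_of_notMem hy, add_zero]
              exact hab.tiltedPot_le _ (hG.le y) _ (hF.le y)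
      _ ≤ hκ.energy hf hg η M F G :=
          hκ.setIntegral_tiltedPot_le_energy hR hf hg η F hG (by linarith)
      _ ≤ M * tiltedPot hf hg η a b + R := hab.energy_frontSeq_le hκ hR0 hR hhf hhg hη hM
  linarith

lemma lt_frontSeq_of_gap (hab : IsFarField hf hg η a b) (hκ : IsEvenDensity κ) (hR0 : 0 ≤ R)
    (hR : ∀ y, R < |y| → κ y = 0) (hhf : MemX hf) (hhg : MemX hg) (hη : 0 ≤ η)
    (hgap : ∀ u v : unitInterval, u ≤ m ∨ v ≤ m →
      tiltedPot hf hg η a b + δ ≤ tiltedPot hf hg η u v) (hx : 0 ≤ x) (hxδ : R < x * δ) (n : ℕ) :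
    m < hκ.frontSeq hhf hhg η a b n x ∧
      m < hκ.cappedStep hhg η a (hκ.frontSeq hhf hhg η a b n) x := by
  by_contra! hnot
  refine hxδ.not_ge (hab.mul_le_of_gap hκ hR0 hR hhf hhg hη n hx fun y hy => hgap _ _ ?_)
  by_cases hlt : m < hκ.frontSeq hhf hhg η a b n x
  · exact Or.inl ((OrderHom.monotone _ hy.2.le).trans (hnot hlt))
  · exact Or.inr ((OrderHom.monotone _ hy.2.le).trans (not_lt.1 hlt))

end IsFarField

end FrontSequence

section Subsolution

variable {h hf hg ω κ : ℝ → ℝ} {R η δ : ℝ} {a b m : unitInterval}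

namespace IsEvenDensity

/-- The one-sided termination of the coupled recursion, as a monotone map of the `F`-component. -/
def terminatedRecursion (hω : IsEvenDensity ω) (hhf : MemX hf) (hhg : MemX hg) :
    Profile →o Profile :=
  (terminate.comp (hω.step hhf.response)).comp (hω.step hhg.response)

/-- The slack absorbs both the change of kernel and the possible discontinuity of `h` in the
limit. -/
lemma le_terminate_step_iInf (hω : IsEvenDensity ω) (hκ : IsEvenDensity κ) (hη : 0 < η)
    (hclose : ∀ F x, (hκ.average F x : ℝ) ≤ hω.average F x + η / 2) (hh : MemX h)
    {X : ℕ → Profile} (hX : Antitone X) {Z : Profile} (hZ : ∀ n, Z ≤ hκ.cappedStep hh η m (X n)) :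
    Z ≤ terminate (hω.step hh.response (⨅ n, X n)) := fun x => by
  rcases lt_or_ge x 0 with hx | hx
  · rw [terminate_of_neg _ hx, ← hκ.cappedStep_of_neg hh η m (X 0) hx]
    exact hZ 0 x
  · set c := hω.average (⨅ n, X n) x
    obtain ⟨n, hn⟩ := ((hω.tendsto_average_iInf hX x).eventually_lt_const
      (show (c : ℝ) < c + η / 2 by linarith)).exists
    have hZn : (Z x : ℝ) ≤ hh.cappedResponse η m (hκ.average (X n) x) := by
      rw [← hκ.cappedStep_of_nonneg hh η m (X n) hx]
      exact hZ n x
    rw [terminate_of_nonneg _ hx, hω.step_apply]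
    calc (Z x : ℝ) ≤ extendX h (hκ.average (X n) x - η) := hZn.trans (min_le_right (m : ℝ) _)
      _ ≤ extendX h c := hh.monotone_extendX (by linarith [hclose (X n) x])
      _ = h c := extendX_of_mem c.2

end IsEvenDensity

lemma IsFarField.exists_le_terminatedRecursion (hab : IsFarField hf hg η a b)
    (hω : IsEvenDensity ω) (hκ : IsEvenDensity κ) (hR0 : 0 ≤ R) (hR : ∀ y, R < |y| → κ y = 0)
    (hclose : ∀ F x, (hκ.average F x : ℝ) ≤ hω.average F x + η / 2)
    (hhf : MemX hf) (hhg : MemX hg) (hη : 0 < η) (hδ : 0 < δ)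
    (hgap : ∀ u v : unitInterval, u ≤ m ∨ v ≤ m →
      tiltedPot hf hg η a b + δ ≤ tiltedPot hf hg η u v) :
    ∃ X, X ≤ hω.terminatedRecursion hhf hhg X ∧
      ∀ᶠ x in atTop, m ≤ X x ∧ m ≤ hω.step hhg.response X x := by
  set F := hκ.frontSeq hhf hhg η a b
  set G : ℕ → Profile := fun n => hκ.cappedStep hhg η a (F n)
  have hF : Antitone F := hab.antitone_frontSeq hκ hR0 hR hhf hhg
  have hG : Antitone G := fun n k hnk => (hκ.cappedStep hhg η a).monotone (hF hnk)
  have hGstep : ⨅ n, G n ≤ hω.step hhg.response (⨅ n, F n) :=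
    (hω.le_terminate_step_iInf hκ hη hclose hhg hF (iInf_le G)).trans (terminate_le _)
  have hFstep : ⨅ n, F n ≤ terminate (hω.step hhf.response (⨅ n, G n)) :=
    hω.le_terminate_step_iInf hκ hη hclose hhf hG fun n =>
      (iInf_le F (n + 1)).trans_eq (hκ.frontSeq_succ hhf hhg η a b n)
  refine ⟨⨅ n, F n, hFstep.trans ?_, ?_⟩
  · exact (terminate.comp (hω.step hhf.response)).monotone hGstep
  · filter_upwards [eventually_gt_atTop (R / δ), eventually_ge_atTop 0] with x hxδ hx
    have hlt := hab.lt_frontSeq_of_gap hκ hR0 hR hhf hhg hη.le hgap hx ((div_lt_iff₀ hδ).1 hxδ)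
    refine ⟨?_, le_trans ?_ (hGstep x)⟩
    · rw [OrderHom.iInf_apply]
      exact le_iInf fun n => (hlt n).1.le
    · rw [OrderHom.iInf_apply]
      exact le_iInf fun n => (hlt n).2.le

lemma IsEvenDensity.exists_le_terminatedRecursion (hω : IsEvenDensity ω) (hhf : MemX hf)
    (hhg : MemX hg)
    (hmin : ∀ u ∈ Icc (0 : ℝ) 1, ∀ v ∈ Icc (0 : ℝ) 1, ¬(u = 1 ∧ v = 1) →
      Pot hf hg 1 1 < Pot hf hg u v) (hm : m < 1) :
    ∃ X, X ≤ hω.terminatedRecursion hhf hhg X ∧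
      ∀ᶠ x in atTop, m ≤ X x ∧ m ≤ hω.step hhg.response X x := by
  obtain ⟨δ, hδ, hgap⟩ := exists_gap_of_unique_min hmin hm
  have hη : 0 < δ / 8 := by positivity
  obtain ⟨a, b, hab, htilted⟩ := exists_isFarField hhf hhg hη
  obtain ⟨κ, R, hκ, hR0, hR, hclose⟩ := hω.exists_finite_range (half_pos hη)
  refine hab.exists_le_terminatedRecursion hω hκ hR0.le hR hclose hhf hhg hη (half_pos hδ)
    fun u v huv => ?_
  have hab11 := htilted 1 1
  have huv_nonneg := mul_nonneg hη.le (add_nonneg u.2.1 v.2.1)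
  have hab_nonneg := mul_nonneg hη.le (add_nonneg a.2.1 b.2.1)
  simp only [tiltedPot, Icc.coe_one] at hab11 ⊢
  linarith [hgap u v huv]

end Subsolution

section Limits

variable {h ω : ℝ → ℝ} {F : Profile}

lemma tendsto_atTop_one_of_eventually_ge (hF : ∀ m < 1, ∀ᶠ x in atTop, m ≤ F x) :
    Tendsto (fun x => (F x : ℝ)) atTop (nhds 1) := by
  have hlim : Tendsto F atTop (nhds 1) := by
    refine tendsto_order.2 ⟨fun m hm => ?_, fun m hm => absurd m.2.2 hm.not_ge⟩
    obtain ⟨m', hmm', hm'⟩ := exists_between hm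
    exact (hF m' hm').mono fun x hx => hmm'.trans_le hx
  exact (continuous_subtype_val.tendsto _).comp hlim

lemma MemX.tendsto_response_zero (hh : MemX h) (hcont : rm h 0 = 0) :
    Tendsto hh.response (nhds 0) (nhds 0) := by
  refine tendsto_order.2 ⟨fun m hm => absurd m.2.1 hm.not_ge, fun m hm => ?_⟩
  have hlt : sInf (h '' Ioc 0 1) < m := by
    rw [rm, if_neg (by norm_num)] at hcont
    exact hcont.trans_lt hm
  obtain ⟨_, ⟨u, hu, rfl⟩, hum⟩ := exists_lt_of_csInf_lt ((nonempty_Ioc.2 one_pos).image h) hlt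
  have hu0 : (0 : unitInterval) < ⟨u, hu.1.le, hu.2⟩ := hu.1
  filter_upwards [eventually_lt_nhds hu0] with c hc
  exact (hh.response.monotone hc.le).trans_lt hum

lemma IsEvenDensity.tendsto_step_response_atBot (hω : IsEvenDensity ω) (hh : MemX h)
    (hcont : rm h 0 = 0) (hF : Tendsto (fun x => (F x : ℝ)) atBot (nhds 0)) :
    Tendsto (fun x => (hω.step hh.response F x : ℝ)) atBot (nhds 0) := by
  have havg : Tendsto (hω.average F) atBot (nhds 0) :=
    tendsto_subtype_rng.2 (hω.tendsto_average_atBot hF)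
  exact (continuous_subtype_val.tendsto _).comp ((hh.tendsto_response_zero hcont).comp havg)

end Limits

theorem continuum_terminated_fixed_point_general
    {ω hf hg : ℝ → ℝ} (hω : IsEvenDensity ω) (hhf : MemX hf) (hhg : MemX hg)
    (hgcont : rm hg 0 = 0)
    (hmin : ∀ u ∈ Icc (0 : ℝ) 1, ∀ v ∈ Icc (0 : ℝ) 1, ¬(u = 1 ∧ v = 1) →
      Pot hf hg 1 1 < Pot hf hg u v) :
    ∃ F G : ℝ → ℝ,
      MemPsi F ∧ MemPsi G ∧ Interpolates F 0 1 ∧ Interpolates G 0 1 ∧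
      (∀ x < 0, F x = 0) ∧ (∀ x ≥ 0, F x = hf (conv G ω x)) ∧ ∀ x, G x = hg (conv F ω x) := by
  set T := hω.terminatedRecursion hhf hhg
  obtain ⟨F, hfix, hgreatest⟩ : ∃ F, T F = F ∧ ∀ X ≤ T X, X ≤ F :=
    ⟨OrderHom.gfp (α := Profile) T, OrderHom.map_gfp (α := Profile) T,
      fun _ => OrderHom.le_gfp (α := Profile) T⟩
  set G := hω.step hhg.response F
  have hFG : F = terminate (hω.step hhf.response G) := hfix.symm
  have hF_neg : ∀ x < 0, (F x : ℝ) = 0 := fun x hx => by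
    rw [hFG, terminate_of_neg _ hx, Icc.coe_zero]
  have hF_nonneg : ∀ x ≥ 0, (F x : ℝ) = hf (conv (fun y => G y) ω x) := fun x hx => by
    rw [← hω.coe_step_response hhf, hFG, terminate_of_nonneg _ hx]
  have hF_atBot : Tendsto (fun x => (F x : ℝ)) atBot (nhds 0) :=
    tendsto_const_nhds.congr' ((eventually_lt_atBot 0).mono fun x hx => (hF_neg x hx).symm)
  have hlarge : ∀ m < 1, ∀ᶠ x in atTop, m ≤ F x ∧ m ≤ G x := fun m hm => by
    obtain ⟨X, hXT, hX⟩ := hω.exists_le_terminatedRecursion hhf hhg hmin hm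
    have hXF : X ≤ F := hgreatest X hXT
    exact hX.mono fun x hx =>
      ⟨hx.1.trans (hXF x), hx.2.trans ((hω.step hhg.response).monotone hXF x)⟩
  exact ⟨fun x => F x, fun x => G x, memPsi_profile F, memPsi_profile G,
    ⟨hF_atBot, tendsto_atTop_one_of_eventually_ge fun m hm => (hlarge m hm).mono fun _ => And.left⟩,
    ⟨hω.tendsto_step_response_atBot hhg hgcont hF_atBot,
      tendsto_atTop_one_of_eventually_ge fun m hm => (hlarge m hm).mono fun _ => And.right⟩,
    hF_neg, hF_nonneg, hω.coe_step_response hhg F⟩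

/-- **Continuum terminated fixed point.** The hypothesis `rm hg 0 = 0` expresses the
continuity of `hg` at `0` (recall the convention `hg(0−) = 0`). -/
theorem continuum_terminated_fixed_point
    (ω hf hg : ℝ → ℝ)
    (hω : IsAveragingKernel ω) (hreg : IsRegularKernel ω)
    (hhf : MemX hf) (hhg : MemX hg)
    (hgcont : rm hg 0 = 0)
    (hmin : ∀ u ∈ Icc (0:ℝ) 1, ∀ v ∈ Icc (0:ℝ) 1, ¬(u = 1 ∧ v = 1) →
      Pot hf hg 1 1 < Pot hf hg u v) :
    ∃ F G : ℝ → ℝ,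
      MemPsi F ∧ MemPsi G ∧ Interpolates F 0 1 ∧ Interpolates G 0 1 ∧
      (∀ x < (0:ℝ), F x = 0) ∧
      (∀ x > (0:ℝ), F x = hf (conv G ω x)) ∧
      (∀ x, G x = hg (conv F ω x)) := by
  obtain ⟨F, G, hF, hG, hF01, hG01, hneg, hnonneg, hGF⟩ :=
    continuum_terminated_fixed_point_general hω.isEvenDensity hhf hhg hgcont hmin
  exact ⟨F, G, hF, hG, hF01, hG01, hneg, fun x hx => hnonneg x hx.le, hGF⟩
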